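/- arXiv:2406.09536 — 2 statements merged into one kernel-verified Lean document; each statement's English description precedes it below -/
import Mathlib

section
/- For every odd integer n ≥ 3 and every probability density f on [-1,1]² that is continuous and positive almost everywhere, the equilibrium system admits a non-trivial solution (θ1,…,θ8) ∈ [0,π/2]⁸; moreover this solution has θi > 0 for every i ∈ {1,…,8}. -/
open MeasureTheory Real Set

noncomputable section

/-- The square `[-1,1]²`. -/
def Sq : Set (ℝ × ℝ) := Set.Icc (-1 : ℝ) 1 ×ˢ Set.Icc (-1 : ℝ) 1

/-- A probability density supported on `[-1,1]²`, continuous and positive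
almost everywhere on the square. -/
structure IsNiceDensity (f : ℝ × ℝ → ℝ) : Prop where
  nonneg : ∀ p, 0 ≤ f p
  vanish : ∀ p ∉ Sq, f p = 0
  total : (∫ p in Sq, f p) = 1
  cont : ContinuousOn f Sq
  pos_ae : ∀ᵐ p ∂(volume.restrict Sq), 0 < f p

/-- Region `R1(θ) = {0 < x ≤ 1, 0 < y < x·tan θ}`; for `θ = π/2` it is the full
open quadrant. -/
def R1 (θ : ℝ) : Set (ℝ × ℝ) :=
  {p | 0 < p.1 ∧ p.1 ≤ 1 ∧ 0 < p.2 ∧ (θ = π / 2 ∨ p.2 < p.1 * tan θ)}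

def R2 (θ : ℝ) : Set (ℝ × ℝ) :=
  {p | -1 ≤ p.1 ∧ p.1 < 0 ∧ 0 < p.2 ∧ (θ = π / 2 ∨ p.2 < -p.1 * tan θ)}

def R3 (θ : ℝ) : Set (ℝ × ℝ) :=
  {p | -1 ≤ p.1 ∧ p.1 < 0 ∧ 0 < -p.2 ∧ (θ = π / 2 ∨ -p.2 < -p.1 * tan θ)}

def R4 (θ : ℝ) : Set (ℝ × ℝ) :=
  {p | 0 < p.1 ∧ p.1 ≤ 1 ∧ 0 < -p.2 ∧ (θ = π / 2 ∨ -p.2 < p.1 * tan θ)}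

def R5 (θ : ℝ) : Set (ℝ × ℝ) :=
  {p | 0 < p.2 ∧ p.2 ≤ 1 ∧ 0 < p.1 ∧ (θ = π / 2 ∨ p.1 < p.2 * tan θ)}

def R6 (θ : ℝ) : Set (ℝ × ℝ) :=
  {p | 0 < p.2 ∧ p.2 ≤ 1 ∧ 0 < -p.1 ∧ (θ = π / 2 ∨ -p.1 < p.2 * tan θ)}

def R7 (θ : ℝ) : Set (ℝ × ℝ) :=
  {p | -1 ≤ p.2 ∧ p.2 < 0 ∧ 0 < -p.1 ∧ (θ = π / 2 ∨ -p.1 < -p.2 * tan θ)}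

def R8 (θ : ℝ) : Set (ℝ × ℝ) :=
  {p | -1 ≤ p.2 ∧ p.2 < 0 ∧ 0 < p.1 ∧ (θ = π / 2 ∨ p.1 < -p.2 * tan θ)}

def I1 (f : ℝ × ℝ → ℝ) (θ : ℝ) : ℝ := ∫ p in R1 θ, f p
def I2 (f : ℝ × ℝ → ℝ) (θ : ℝ) : ℝ := ∫ p in R2 θ, f p
def I3 (f : ℝ × ℝ → ℝ) (θ : ℝ) : ℝ := ∫ p in R3 θ, f p
def I4 (f : ℝ × ℝ → ℝ) (θ : ℝ) : ℝ := ∫ p in R4 θ, f p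
def I5 (f : ℝ × ℝ → ℝ) (θ : ℝ) : ℝ := ∫ p in R5 θ, f p
def I6 (f : ℝ × ℝ → ℝ) (θ : ℝ) : ℝ := ∫ p in R6 θ, f p
def I7 (f : ℝ × ℝ → ℝ) (θ : ℝ) : ℝ := ∫ p in R7 θ, f p
def I8 (f : ℝ × ℝ → ℝ) (θ : ℝ) : ℝ := ∫ p in R8 θ, f p

def Q1p (f : ℝ × ℝ → ℝ) : ℝ := ∫ p in {p ∈ Sq | 0 < p.1}, f p
def Q1m (f : ℝ × ℝ → ℝ) : ℝ := ∫ p in {p ∈ Sq | p.1 < 0}, f p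
def Q2p (f : ℝ × ℝ → ℝ) : ℝ := ∫ p in {p ∈ Sq | 0 < p.2}, f p
def Q2m (f : ℝ × ℝ → ℝ) : ℝ := ∫ p in {p ∈ Sq | p.2 < 0}, f p

def K1 (f : ℝ × ℝ → ℝ) (n : ℕ) : ℝ := Q1m f ^ ((n - 1) / 2) * Q1p f ^ ((n - 3) / 2)
def K2 (f : ℝ × ℝ → ℝ) (n : ℕ) : ℝ := Q1m f ^ ((n - 3) / 2) * Q1p f ^ ((n - 1) / 2)
def L1 (f : ℝ × ℝ → ℝ) (n : ℕ) : ℝ := Q2m f ^ ((n - 3) / 2) * Q2p f ^ ((n - 1) / 2)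
def L2 (f : ℝ × ℝ → ℝ) (n : ℕ) : ℝ := Q2m f ^ ((n - 1) / 2) * Q2p f ^ ((n - 3) / 2)

/-- One equation of the equilibrium system: if the denominator is nonzero then
`θ = arctan (num / den)`; if the denominator is zero and the numerator positive then
`θ = π/2`; if both vanish, no constraint is imposed. -/
def EqnHolds (θ num den : ℝ) : Prop :=
  if den = 0 then (num = 0 ∨ θ = π / 2) else θ = arctan (num / den)

/-- The equilibrium system of the vote-trading game. -/
def EqSys (f : ℝ × ℝ → ℝ) (n : ℕ) (θ1 θ2 θ3 θ4 θ5 θ6 θ7 θ8 : ℝ) : Prop :=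
  EqnHolds θ1 ((I6 f θ6 + I7 f θ7) * K1 f n) ((I7 f θ7 + I8 f θ8) * L1 f n) ∧
  EqnHolds θ2 ((I5 f θ5 + I8 f θ8) * K2 f n) ((I7 f θ7 + I8 f θ8) * L1 f n) ∧
  EqnHolds θ3 ((I5 f θ5 + I8 f θ8) * K2 f n) ((I5 f θ5 + I6 f θ6) * L2 f n) ∧
  EqnHolds θ4 ((I6 f θ6 + I7 f θ7) * K1 f n) ((I5 f θ5 + I6 f θ6) * L2 f n) ∧
  EqnHolds θ5 ((I3 f θ3 + I4 f θ4) * L2 f n) ((I2 f θ2 + I3 f θ3) * K2 f n) ∧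
  EqnHolds θ6 ((I3 f θ3 + I4 f θ4) * L2 f n) ((I1 f θ1 + I4 f θ4) * K1 f n) ∧
  EqnHolds θ7 ((I1 f θ1 + I2 f θ2) * L1 f n) ((I1 f θ1 + I4 f θ4) * K1 f n) ∧
  EqnHolds θ8 ((I1 f θ1 + I2 f θ2) * L1 f n) ((I2 f θ2 + I3 f θ3) * K2 f n)

/-!
The eight unknowns reduce to two. Write `A = I6 + I7`, `B = I7 + I8`, `C = I5 + I8`,
`D = I5 + I6`. The slopes `tan θ1, …, tan θ4` are, up to positive constants, `A/B`, `C/B`, `C/D`,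
`A/D`. Since `A + C = B + D`, they depend only on the odds `a = A/C` and `b = B/D`. In the same way
`tan θ5, …, tan θ8` depend only on `x = (I3 + I4)/(I1 + I2)` and `y = (I2 + I3)/(I1 + I4)`, and the
two dependences have the same form once the second family is listed in the order 5, 8, 7, 6. The
system thus becomes a fixed point equation for the composition of the two half-maps
`(a, b) ↦ (x, y) ↦ (a, b)` on positive pairs (`exists_fixedPoint_odds`).

In logarithmic coordinates this composition is a bounded continuous self-map of the plane: `log x`
is bounded for all `a, b`, because one of `θ1, θ2` and one of `θ3, θ4` always stays away from `0`
(`exists_abs_log_oddsX_le`), and `log b` is bounded as soon as `log x` is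
(`exists_abs_log_oddsY_le`). Hence no boundary behaviour has to be analysed, and the solution
has all `θi` in the open interval `(0, π/2)`.

A bounded continuous self-map `G` of `ℂ` has a fixed point (`exists_fixedPoint_of_bounded`):
otherwise `z - G z` would have a continuous logarithm on the simply connected plane, while on a
large circle it is homotopic to `z` and winds once around `0`.

The integrals `t ↦ Iᵢ (arctan t)` are positive, monotone and continuous (`profile_I1`); the regions
other than `R1` are its images under symmetries of the square (`profile_of_symmetry`).
-/

/-! ### A planar fixed point theorem -/

/-- A bounded continuous self-map of the plane has a fixed point (a form of the planar Brouwer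
theorem). Otherwise `z - G z` has a continuous logarithm on `ℂ`, although it winds once around
`0` along a large circle. -/
theorem exists_fixedPoint_of_bounded (G : ℂ → ℂ) (hG : Continuous G) (M : ℝ)
    (hM : ∀ z, ‖G z‖ ≤ M) : ∃ z, G z = z := by
  by_contra! hne
  have hsc : IsSimplyConnected (univ : Set ℂ) := by
    have : SimplyConnectedSpace (univ : Set ℂ) :=
      (Homeomorph.Set.univ ℂ).symm.toHomotopyEquiv.simplyConnectedSpace_iff.1 inferInstance
    exact this
  obtain ⟨h, hhc, hh⟩ := Complex.exists_continuousOn_eqOn_exp_comp hsc isOpen_univ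
    (g := fun z => z - G z) (by fun_prop)
    (by rintro ⟨z, -, hz⟩; exact hne z (sub_eq_zero.1 hz).symm)
  have hhc : Continuous h := continuousOn_univ.1 hhc
  have hh : ∀ z, Complex.exp (h z) = z - G z := fun z => hh (mem_univ z)
  have hM0 : 0 ≤ M := (norm_nonneg _).trans (hM 0)
  set r : ℝ := M + 1 with hr
  have hr0 : 0 < r := by linarith
  set w : ℝ → ℂ := fun t => r * Complex.exp (t * Complex.I) with hw
  have hwc : Continuous w := by fun_prop
  have hwn : ∀ t, ‖w t‖ = r := fun t => by
    simp [hw, Complex.norm_exp_ofReal_mul_I, abs_of_pos hr0]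
  have hw0 : ∀ t, w t ≠ 0 := fun t => by
    rw [← norm_pos_iff, hwn]; exact hr0
  -- On the circle of radius `r`, the quotient `(z - G z) / z` stays in the disc `|q - 1| < 1`.
  set q : ℝ → ℂ := fun t => 1 - G (w t) / w t with hq
  have hqc : Continuous q := by
    refine continuous_const.sub ((hG.comp hwc).div hwc hw0)
  have hqs : ∀ t, q t ∈ Complex.slitPlane := fun t => by
    left
    have h1 : ‖G (w t) / w t‖ < 1 := by
      rw [norm_div, hwn, div_lt_one hr0]
      exact (hM _).trans_lt (by linarith)
    have h2 := (Complex.re_le_norm (G (w t) / w t)).trans_lt h1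
    simp only [hq, Complex.sub_re, Complex.one_re]
    linarith
  set φ : ℝ → ℂ := fun t => h (w t) - t * Complex.I - Complex.log (q t) with hφ
  have hφc : Continuous φ :=
    ((hhc.comp hwc).sub (by fun_prop)).sub (hqc.clog hqs)
  have hφe : ∀ t, Complex.exp (φ t) = r := fun t => by
    have hq0 : q t ≠ 0 := Complex.slitPlane_ne_zero (hqs t)
    have h1 : w t - G (w t) = w t * q t := by
      simp only [hq]
      field_simp [hw0 t]
    simp only [hφ]
    rw [Complex.exp_sub, Complex.exp_sub, hh, Complex.exp_log hq0, h1]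
    have := Complex.exp_ne_zero (t * Complex.I)
    simp only [hw]
    field_simp
  have hint : ∀ t, ∃ n : ℤ, φ t = φ 0 + n * (2 * π * Complex.I) := fun t =>
    Complex.exp_eq_exp_iff_exists_int.1 ((hφe t).trans (hφe 0).symm)
  have hw2 : w (2 * π) = w 0 := by
    simp [hw, Complex.exp_two_pi_mul_I]
  have hφ2 : φ (2 * π) = φ 0 - 2 * π * Complex.I := by
    simp only [hφ, hq, hw2]
    push_cast
    ring
  -- The winding number function is integer-valued but takes the values `0` and `-1`.
  set ψ : ℝ → ℝ := fun t => (φ t - φ 0).im / (2 * π) with hψ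
  have hψc : Continuous ψ := (Complex.continuous_im.comp (hφc.sub continuous_const)).div_const _
  have hψ0 : ψ 0 = 0 := by simp [hψ]
  have hψ1 : ψ (2 * π) = -1 := by
    simp only [hψ, hφ2]
    simp
  obtain ⟨t, -, ht⟩ := intermediate_value_Icc' (by positivity : (0 : ℝ) ≤ 2 * π) hψc.continuousOn
    (show (-1 / 2 : ℝ) ∈ Icc (ψ (2 * π)) (ψ 0) by rw [hψ0, hψ1]; norm_num)
  obtain ⟨n, hn⟩ := hint t
  have h3 : ψ t = n := by
    simp only [hψ, hn]
    simp
  rw [ht] at h3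
  have h4 : (2 * n : ℝ) = -1 := by linarith
  have h5 : 2 * n = -1 := by exact_mod_cast h4
  omega

/-- The fixed point theorem for pairs of real functions. -/
theorem exists_fixedPoint_real (U V : ℝ → ℝ → ℝ)
    (hU : Continuous fun p : ℝ × ℝ => U p.1 p.2) (hV : Continuous fun p : ℝ × ℝ => V p.1 p.2)
    (M N : ℝ) (hM : ∀ x y, |U x y| ≤ M) (hN : ∀ x y, |V x y| ≤ N) :
    ∃ x y, U x y = x ∧ V x y = y := by
  have hp : Continuous fun z : ℂ => (z.re, z.im) :=
    Complex.continuous_re.prodMk Complex.continuous_im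
  have hU' : Continuous fun z : ℂ => U z.re z.im := hU.comp hp
  have hV' : Continuous fun z : ℂ => V z.re z.im := hV.comp hp
  obtain ⟨z, hz⟩ := exists_fixedPoint_of_bounded
    (fun z => (U z.re z.im : ℂ) + (V z.re z.im : ℂ) * Complex.I)
    (by fun_prop) (M + N) (fun z => by
      refine (norm_add_le _ _).trans (add_le_add ?_ ?_)
      · simpa using hM _ _
      · simpa using hN _ _)
  refine ⟨z.re, z.im, ?_, ?_⟩
  · simpa using congrArg Complex.re hz
  · simpa using congrArg Complex.im hz

/-! ### The reduced two-dimensional map -/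

/-- The properties of the functions `t ↦ Iᵢ (arctan t)` that the fixed point argument uses. -/
structure Profile (j : ℝ → ℝ) : Prop where
  pos : ∀ t, 0 < t → 0 < j t
  le_one : ∀ t, 0 < t → j t ≤ 1
  mono : ∀ s t, 0 < s → s ≤ t → j s ≤ j t
  cont : ContinuousOn j (Ioi 0)

/-- The slopes of one half of the system in terms of the two odds `a = A / C` and `b = B / D`,
where `A + C = B + D`: up to the constants `k i` they are `A / B`, `C / B`, `C / D`, `A / D`. -/
def halfSlope (k : Fin 4 → ℝ) (a b : ℝ) : Fin 4 → ℝ :=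
  ![k 0 * (a * (1 + b) / ((1 + a) * b)), k 1 * ((1 + b) / ((1 + a) * b)),
    k 2 * ((1 + b) / (1 + a)), k 3 * (a * (1 + b) / (1 + a))]

/-- The first odds produced by the slopes `halfSlope k a b`. -/
def oddsX (j : Fin 4 → ℝ → ℝ) (k : Fin 4 → ℝ) (a b : ℝ) : ℝ :=
  (j 2 (halfSlope k a b 2) + j 3 (halfSlope k a b 3)) / (j 0 (halfSlope k a b 0) + j 1 (halfSlope k a b 1))

/-- The second odds produced by the slopes `halfSlope k a b`. -/
def oddsY (j : Fin 4 → ℝ → ℝ) (k : Fin 4 → ℝ) (a b : ℝ) : ℝ :=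
  (j 1 (halfSlope k a b 1) + j 2 (halfSlope k a b 2)) / (j 0 (halfSlope k a b 0) + j 3 (halfSlope k a b 3))

section

variable {j : Fin 4 → ℝ → ℝ} {k : Fin 4 → ℝ}

theorem slope_pos (hk : ∀ i, 0 < k i) {a b : ℝ} (ha : 0 < a) (hb : 0 < b) (i : Fin 4) :
    0 < halfSlope k a b i := by
  have h0 := hk 0
  have h1 := hk 1
  have h2 := hk 2
  have h3 := hk 3
  fin_cases i <;> simp [halfSlope] <;> positivity

theorem oddsX_pos (hj : ∀ i, Profile (j i)) (hk : ∀ i, 0 < k i) {a b : ℝ} (ha : 0 < a)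
    (hb : 0 < b) : 0 < oddsX j k a b :=
  have h i := (hj i).pos _ (slope_pos hk ha hb i)
  div_pos (add_pos (h 2) (h 3)) (add_pos (h 0) (h 1))

theorem oddsY_pos (hj : ∀ i, Profile (j i)) (hk : ∀ i, 0 < k i) {a b : ℝ} (ha : 0 < a)
    (hb : 0 < b) : 0 < oddsY j k a b :=
  have h i := (hj i).pos _ (slope_pos hk ha hb i)
  div_pos (add_pos (h 1) (h 2)) (add_pos (h 0) (h 3))

theorem abs_log_div_le {p q γ : ℝ} (hγ : 0 < γ) (hp : γ ≤ p) (hp' : p ≤ 2) (hq : γ ≤ q)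
    (hq' : q ≤ 2) : |log (p / q)| ≤ log 2 - log γ := by
  rw [log_div (by linarith) (by linarith), abs_le]
  have h1 := log_le_log hγ hp
  have h2 := log_le_log hγ hq
  have h3 := log_le_log (by linarith) hp'
  have h4 := log_le_log (by linarith) hq'
  constructor <;> linarith

theorem exists_profile_lower (hj : ∀ i, Profile (j i)) (hk : ∀ i, 0 < k i) {s : ℝ} (hs : 0 < s) :
    ∃ γ, 0 < γ ∧ ∀ i t, k i * s ≤ t → γ ≤ j i t := by
  refine ⟨Finset.univ.inf' Finset.univ_nonempty fun i => j i (k i * s), ?_, fun i t ht => ?_⟩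
  · rw [Finset.lt_inf'_iff]
    exact fun i _ => (hj i).pos _ (mul_pos (hk i) hs)
  · exact (Finset.inf'_le _ (Finset.mem_univ i)).trans
      ((hj i).mono _ _ (mul_pos (hk i) hs) ht)

/-- The first odds are bounded whatever `a` and `b` are: one of the slopes `2`, `3` and one of the
slopes `0`, `1` is always bounded below. -/
theorem exists_abs_log_oddsX_le (hj : ∀ i, Profile (j i)) (hk : ∀ i, 0 < k i) :
    ∃ M, ∀ a b, 0 < a → 0 < b → |log (oddsX j k a b)| ≤ M := by
  obtain ⟨γ, hγ, h⟩ := exists_profile_lower hj hk (s := 1 / 2) (by norm_num)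
  refine ⟨log 2 - log γ, fun a b ha hb => ?_⟩
  have hp i := (hj i).pos _ (slope_pos hk ha hb i)
  have hu i := (hj i).le_one _ (slope_pos hk ha hb i)
  have hp0 := hp 0
  have hp1 := hp 1
  have hp2 := hp 2
  have hp3 := hp 3
  have key : (γ ≤ j 1 (halfSlope k a b 1) ∧ γ ≤ j 2 (halfSlope k a b 2)) ∨
      (γ ≤ j 0 (halfSlope k a b 0) ∧ γ ≤ j 3 (halfSlope k a b 3)) := by
    rcases le_total a 1 with h1 | h1
    · refine Or.inl ⟨h _ _ (mul_le_mul_of_nonneg_left ?_ (hk _).le),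
        h _ _ (mul_le_mul_of_nonneg_left ?_ (hk _).le)⟩
      · rw [div_le_div_iff₀ (by norm_num) (by positivity)]; nlinarith
      · rw [div_le_div_iff₀ (by norm_num) (by positivity)]; nlinarith
    · refine Or.inr ⟨h _ _ (mul_le_mul_of_nonneg_left ?_ (hk _).le),
        h _ _ (mul_le_mul_of_nonneg_left ?_ (hk _).le)⟩
      · rw [div_le_div_iff₀ (by norm_num) (by positivity)]; nlinarith [mul_pos ha hb]
      · rw [div_le_div_iff₀ (by norm_num) (by positivity)]; nlinarith [mul_pos ha hb]
  refine abs_log_div_le hγ ?_ (by linarith [hu 2, hu 3]) ?_ (by linarith [hu 0, hu 1]) <;>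
  · rcases key with ⟨h1, h2⟩ | ⟨h1, h2⟩ <;> linarith

/-- The second odds are bounded as long as `a` is bounded above and away from `0`, since then all
four slopes are bounded below. -/
theorem exists_abs_log_oddsY_le (hj : ∀ i, Profile (j i)) (hk : ∀ i, 0 < k i) (M : ℝ) :
    ∃ N, ∀ a b, 0 < a → 0 < b → |log a| ≤ M → |log (oddsY j k a b)| ≤ N := by
  obtain ⟨γ, hγ, h⟩ := exists_profile_lower hj hk (s := 1 / (1 + exp M)) (by positivity)
  refine ⟨log 2 - log γ, fun a b ha hb hM => ?_⟩
  rw [abs_le] at hM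
  have ha1 : a ≤ exp M := (log_le_iff_le_exp ha).1 hM.2
  have ha2 : 1 ≤ a * exp M := by
    have h1 := (le_log_iff_exp_le ha).1 hM.1
    calc (1 : ℝ) = exp (-M) * exp M := by rw [← exp_add]; simp
      _ ≤ a * exp M := by gcongr
  have he := exp_pos M
  have hp i := (hj i).pos _ (slope_pos hk ha hb i)
  have hu i := (hj i).le_one _ (slope_pos hk ha hb i)
  have key : ∀ i, γ ≤ j i (halfSlope k a b i) := by
    intro i
    apply h
    have hab := mul_pos ha hb
    have hbe := mul_pos hb he
    fin_cases i <;> refine mul_le_mul_of_nonneg_left ?_ (hk _).le <;>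
      rw [div_le_div_iff₀ (by positivity) (by positivity)] <;> nlinarith
  refine abs_log_div_le hγ ?_ (by linarith [hu 1, hu 2]) ?_ (by linarith [hu 0, hu 3])
  · linarith [key 1, hp 2]
  · linarith [key 0, hp 3]

theorem continuousOn_profile_slope (hj : ∀ i, Profile (j i)) (hk : ∀ i, 0 < k i) (i : Fin 4) :
    ContinuousOn (fun p : ℝ × ℝ => j i (halfSlope k p.1 p.2 i)) (Ioi 0 ×ˢ Ioi 0) := by
  refine (hj i).cont.comp ?_ (fun p hp => slope_pos hk hp.1 hp.2 i)
  have h1 : ∀ p ∈ (Ioi 0 ×ˢ Ioi 0 : Set (ℝ × ℝ)), (1 + p.1) * p.2 ≠ 0 := fun p hp => by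
    have h1 : 0 < p.1 := hp.1
    have h2 : 0 < p.2 := hp.2
    positivity
  have h2 : ∀ p ∈ (Ioi 0 ×ˢ Ioi 0 : Set (ℝ × ℝ)), 1 + p.1 ≠ 0 := fun p hp => by
    have h1 : 0 < p.1 := hp.1
    positivity
  fin_cases i <;> simp only [halfSlope] <;>
    refine ContinuousOn.mul (by fun_prop) (ContinuousOn.div (by fun_prop) (by fun_prop) ?_) <;>
    assumption

theorem continuousOn_oddsX (hj : ∀ i, Profile (j i)) (hk : ∀ i, 0 < k i) :
    ContinuousOn (fun p : ℝ × ℝ => oddsX j k p.1 p.2) (Ioi 0 ×ˢ Ioi 0) :=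
  ((continuousOn_profile_slope hj hk 2).add (continuousOn_profile_slope hj hk 3)).div
    ((continuousOn_profile_slope hj hk 0).add (continuousOn_profile_slope hj hk 1))
    fun _ hp => (add_pos ((hj 0).pos _ (slope_pos hk hp.1 hp.2 0))
      ((hj 1).pos _ (slope_pos hk hp.1 hp.2 1))).ne'

theorem continuousOn_oddsY (hj : ∀ i, Profile (j i)) (hk : ∀ i, 0 < k i) :
    ContinuousOn (fun p : ℝ × ℝ => oddsY j k p.1 p.2) (Ioi 0 ×ˢ Ioi 0) :=
  ((continuousOn_profile_slope hj hk 1).add (continuousOn_profile_slope hj hk 2)).div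
    ((continuousOn_profile_slope hj hk 0).add (continuousOn_profile_slope hj hk 3))
    fun _ hp => (add_pos ((hj 0).pos _ (slope_pos hk hp.1 hp.2 0))
      ((hj 3).pos _ (slope_pos hk hp.1 hp.2 3))).ne'

/-- The composition of the two half-maps has a fixed point. In logarithmic coordinates it is a
bounded continuous self-map of the plane: the first odds are always bounded, and this bounds the
second odds of the other half. -/
theorem exists_fixedPoint_odds {m : Fin 4 → ℝ → ℝ} {l : Fin 4 → ℝ}
    (hj : ∀ i, Profile (j i)) (hk : ∀ i, 0 < k i)
    (hm : ∀ i, Profile (m i)) (hl : ∀ i, 0 < l i) :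
    ∃ a b, 0 < a ∧ 0 < b ∧
      oddsX m l (oddsX j k a b) (oddsY j k a b) = a ∧
      oddsY m l (oddsX j k a b) (oddsY j k a b) = b := by
  obtain ⟨M, hM⟩ := exists_abs_log_oddsX_le hj hk
  obtain ⟨M', hM'⟩ := exists_abs_log_oddsX_le hm hl
  obtain ⟨N, hN⟩ := exists_abs_log_oddsY_le hm hl M
  have hx : ∀ u v : ℝ, 0 < oddsX j k (exp u) (exp v) := fun u v =>
    oddsX_pos hj hk (exp_pos _) (exp_pos _)
  have hy : ∀ u v : ℝ, 0 < oddsY j k (exp u) (exp v) := fun u v =>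
    oddsY_pos hj hk (exp_pos _) (exp_pos _)
  have hE : Continuous fun p : ℝ × ℝ => (exp p.1, exp p.2) := by fun_prop
  have hEm : ∀ p : ℝ × ℝ, (exp p.1, exp p.2) ∈ (Ioi 0 ×ˢ Ioi 0 : Set (ℝ × ℝ)) :=
    fun p => ⟨exp_pos _, exp_pos _⟩
  have hc : Continuous fun p : ℝ × ℝ =>
      (oddsX j k (exp p.1) (exp p.2), oddsY j k (exp p.1) (exp p.2)) :=
    ((continuousOn_oddsX hj hk).comp_continuous hE hEm).prodMk
      ((continuousOn_oddsY hj hk).comp_continuous hE hEm)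
  obtain ⟨u, v, hu, hv⟩ := exists_fixedPoint_real
    (fun u v => log (oddsX m l (oddsX j k (exp u) (exp v)) (oddsY j k (exp u) (exp v))))
    (fun u v => log (oddsY m l (oddsX j k (exp u) (exp v)) (oddsY j k (exp u) (exp v))))
    (((continuousOn_oddsX hm hl).comp_continuous hc fun p => ⟨hx p.1 p.2, hy p.1 p.2⟩).log
      fun p => (oddsX_pos hm hl (hx p.1 p.2) (hy p.1 p.2)).ne')
    (((continuousOn_oddsY hm hl).comp_continuous hc fun p => ⟨hx p.1 p.2, hy p.1 p.2⟩).log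
      fun p => (oddsY_pos hm hl (hx p.1 p.2) (hy p.1 p.2)).ne')
    M' N (fun u v => hM' _ _ (hx _ _) (hy _ _))
    (fun u v => hN _ _ (hx _ _) (hy _ _) (hM _ _ (exp_pos _) (exp_pos _)))
  refine ⟨exp u, exp v, exp_pos _, exp_pos _, ?_, ?_⟩
  · have h := congrArg exp hu
    rwa [exp_log (oddsX_pos hm hl (hx _ _) (hy _ _))] at h
  · have h := congrArg exp hv
    rwa [exp_log (oddsY_pos hm hl (hx _ _) (hy _ _))] at h

/-- For odds coming from four masses `p i`, the slopes are the quotients of the system. -/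
theorem slope_of_masses {p : Fin 4 → ℝ} (hp : ∀ i, 0 < p i) :
    halfSlope k ((p 2 + p 3) / (p 0 + p 1)) ((p 1 + p 2) / (p 0 + p 3)) =
      ![k 0 * ((p 2 + p 3) / (p 1 + p 2)), k 1 * ((p 0 + p 1) / (p 1 + p 2)),
        k 2 * ((p 0 + p 1) / (p 0 + p 3)), k 3 * ((p 2 + p 3) / (p 0 + p 3))] := by
  have h0 := hp 0
  have h1 := hp 1
  have h2 := hp 2
  have h3 := hp 3
  have hd1 : 1 + (p 2 + p 3) / (p 0 + p 1) = (p 0 + p 1 + p 2 + p 3) / (p 0 + p 1) := by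
    field_simp; ring
  have hd2 : 1 + (p 1 + p 2) / (p 0 + p 3) = (p 0 + p 1 + p 2 + p 3) / (p 0 + p 3) := by
    field_simp; ring
  rw [halfSlope, hd1, hd2]
  ext i
  fin_cases i <;> simp <;> left <;> field_simp

end

/-! ### The region integrals -/

theorem IsNiceDensity.integrable {f : ℝ × ℝ → ℝ} (hf : IsNiceDensity f) : Integrable f := by
  have hc : IsCompact Sq := isCompact_Icc.prod isCompact_Icc
  have h := (hf.cont.integrableOn_compact (μ := volume) hc)
  exact (integrableOn_iff_integrable_of_support_subset (fun p hp => by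
    by_contra h; exact hp (hf.vanish p h))).1 h

theorem IsNiceDensity.setIntegral_le_one {f : ℝ × ℝ → ℝ} (hf : IsNiceDensity f)
    (s : Set (ℝ × ℝ)) : ∫ p in s, f p ≤ 1 := by
  have h : ∫ p in Sq, f p = ∫ p, f p :=
    setIntegral_eq_integral_of_forall_compl_eq_zero fun p hp => hf.vanish p hp
  rw [← hf.total, h]
  exact setIntegral_le_integral hf.integrable (Filter.Eventually.of_forall hf.nonneg)

theorem IsNiceDensity.setIntegral_pos {f : ℝ × ℝ → ℝ} (hf : IsNiceDensity f)
    {s u : Set (ℝ × ℝ)} (hu : IsOpen u) (hne : u.Nonempty) (hus : u ⊆ s) (huS : u ⊆ Sq) :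
    0 < ∫ p in s, f p := by
  rw [setIntegral_pos_iff_support_of_nonneg_ae (Filter.Eventually.of_forall hf.nonneg)
    hf.integrable.integrableOn]
  have hpos := hf.pos_ae
  rw [ae_restrict_iff' (show MeasurableSet Sq from measurableSet_Icc.prod measurableSet_Icc)] at hpos
  refine (hu.measure_pos volume hne).trans_le (measure_mono_ae ?_)
  filter_upwards [hpos] with p hp hpu
  exact ⟨(hp (huS hpu)).ne', hus hpu⟩

theorem IsNiceDensity.comp {f : ℝ × ℝ → ℝ} (hf : IsNiceDensity f) (e : ℝ × ℝ ≃ₜ ℝ × ℝ)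
    (he : MeasurePreserving e) (hS : e ⁻¹' Sq = Sq) : IsNiceDensity (f ∘ e) where
  nonneg p := hf.nonneg _
  vanish p hp := hf.vanish _ fun h => hp (by rw [← hS]; exact h)
  total := by
    have := he.setIntegral_preimage_emb e.measurableEmbedding f Sq
    rw [hS, hf.total] at this
    exact this
  cont := hf.cont.comp e.continuous.continuousOn fun p hp => by rwa [← hS] at hp
  pos_ae := by
    have h := (he.restrict_preimage_emb e.measurableEmbedding Sq).quasiMeasurePreserving.ae
      hf.pos_ae
    rwa [hS] at h

theorem volume_line_eq_zero (t : ℝ) : volume {p : ℝ × ℝ | p.2 = p.1 * t} = 0 := by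
  let φ : ℝ × ℝ →ₗ[ℝ] ℝ := LinearMap.snd ℝ ℝ ℝ - t • LinearMap.fst ℝ ℝ ℝ
  have h := Measure.addHaar_submodule (volume : Measure (ℝ × ℝ)) (LinearMap.ker φ) (by
    intro h
    have h1 : ((0, 1) : ℝ × ℝ) ∈ LinearMap.ker φ := by rw [h]; trivial
    simp [φ] at h1)
  convert h using 2
  ext p
  simp [φ, sub_eq_zero, mul_comm]

theorem mem_R1_arctan (t : ℝ) (p : ℝ × ℝ) :
    p ∈ R1 (arctan t) ↔ 0 < p.1 ∧ p.1 ≤ 1 ∧ 0 < p.2 ∧ p.2 < p.1 * t := by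
  simp [R1, (arctan_lt_pi_div_two t).ne]

theorem measurableSet_R1_arctan (t : ℝ) : MeasurableSet (R1 (arctan t)) := by
  have : R1 (arctan t) = {p | 0 < p.1} ∩ {p | p.1 ≤ 1} ∩ {p | 0 < p.2} ∩ {p | p.2 < p.1 * t} := by
    ext p; rw [mem_R1_arctan]; simp [and_assoc]
  rw [this]
  exact (((measurableSet_lt (by fun_prop) (by fun_prop)).inter
    (measurableSet_le (by fun_prop) (by fun_prop))).inter
    (measurableSet_lt (by fun_prop) (by fun_prop))).inter
    (measurableSet_lt (by fun_prop) (by fun_prop))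

theorem profile_I1 {f : ℝ × ℝ → ℝ} (hf : IsNiceDensity f) :
    Profile fun t => I1 f (arctan t) where
  pos t ht := by
    have ho : IsOpen {p : ℝ × ℝ | 0 < p.1 ∧ p.1 < 1 ∧ 0 < p.2 ∧ p.2 < 1 ∧ p.2 < p.1 * t} := by
      refine (isOpen_lt ?_ ?_).and ((isOpen_lt ?_ ?_).and ((isOpen_lt ?_ ?_).and
        ((isOpen_lt ?_ ?_).and (isOpen_lt ?_ ?_)))) <;> fun_prop
    refine hf.setIntegral_pos ho ⟨(1 / 2, min (1 / 2) (t / 4)), ?_⟩ ?_ ?_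
    · have h1 := min_le_left (1 / 2) (t / 4)
      have h2 := min_le_right (1 / 2) (t / 4)
      have h3 : 0 < min (1 / 2) (t / 4) := lt_min (by norm_num) (by linarith)
      refine ⟨?_, ?_, h3, ?_, ?_⟩ <;> simp only <;> linarith
    · rintro p ⟨h1, h2, h3, h4, h5⟩
      exact (mem_R1_arctan t p).2 ⟨h1, h2.le, h3, h5⟩
    · rintro p ⟨h1, h2, h3, h4, h5⟩
      exact ⟨⟨by linarith, h2.le⟩, ⟨by linarith, h4.le⟩⟩
  le_one t _ := hf.setIntegral_le_one _
  mono s t hs hst := by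
    refine setIntegral_mono_set hf.integrable.integrableOn
      (Filter.Eventually.of_forall hf.nonneg) (Filter.Eventually.of_forall fun p hp => ?_)
    obtain ⟨h1, h2, h3, h4⟩ := (mem_R1_arctan s p).1 hp
    exact (mem_R1_arctan t p).2 ⟨h1, h2, h3, h4.trans_le (by gcongr)⟩
  cont := by
    -- Dominated convergence: off the null line `y = x t` the indicators converge.
    have h : (fun t => I1 f (arctan t)) = fun t => ∫ p, (R1 (arctan t)).indicator f p := by
      ext t; exact (integral_indicator (measurableSet_R1_arctan t)).symm
    rw [h]
    refine continuousOn_of_forall_continuousAt fun t _ => continuousAt_of_dominated (bound := f)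
      (Filter.Eventually.of_forall fun s =>
        (hf.integrable.indicator (measurableSet_R1_arctan s)).aestronglyMeasurable)
      (Filter.Eventually.of_forall fun s => Filter.Eventually.of_forall fun p => ?_)
      hf.integrable ?_
    · rw [norm_indicator_eq_indicator_norm]
      refine (indicator_le_self' (fun p _ => norm_nonneg _) p).trans ?_
      rw [Real.norm_of_nonneg (hf.nonneg p)]
    · have hae : ∀ᵐ p : ℝ × ℝ, p.2 ≠ p.1 * t := by
        rw [ae_iff]; simpa using volume_line_eq_zero t
      filter_upwards [hae] with p hp
      have hc : ContinuousAt (fun s : ℝ => p.1 * s) t := by fun_prop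
      have hev : ∀ᶠ s in nhds t, (p ∈ R1 (arctan s) ↔ p ∈ R1 (arctan t)) := by
        rcases lt_or_gt_of_ne hp with h1 | h1
        · filter_upwards [hc.eventually_const_lt h1] with s hs
          simp [mem_R1_arctan, h1, hs]
        · filter_upwards [hc.eventually_lt_const h1] with s hs
          simp [mem_R1_arctan, h1.not_gt, hs.not_gt]
      refine (continuousAt_const (y := (R1 (arctan t)).indicator f p)).congr ?_
      filter_upwards [hev] with s hs
      by_cases h2 : p ∈ R1 (arctan t)
      · rw [indicator_of_mem h2, indicator_of_mem (hs.2 h2)]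
      · rw [indicator_of_notMem h2, indicator_of_notMem (fun h3 => h2 (hs.1 h3))]

/-- Integrals over a symmetric image of the region `R1` are integrals over `R1` of the transported
density, so they have the same properties. -/
theorem profile_of_symmetry {f : ℝ × ℝ → ℝ} (hf : IsNiceDensity f) (e : ℝ × ℝ ≃ₜ ℝ × ℝ)
    (he : MeasurePreserving e) (hS : e ⁻¹' Sq = Sq) {R : ℝ → Set (ℝ × ℝ)}
    (hR : ∀ θ, e ⁻¹' R θ = R1 θ) : Profile fun t => ∫ p in R (arctan t), f p := by
  convert profile_I1 (hf.comp e he hS) using 2 with t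
  rw [I1, ← hR, ← he.setIntegral_preimage_emb e.measurableEmbedding f]
  rfl

/-- Reflection of the plane in the second coordinate axis. -/
def reflX : ℝ × ℝ ≃ₜ ℝ × ℝ := (Homeomorph.neg ℝ).prodCongr (Homeomorph.refl ℝ)

/-- Exchange of the two coordinates. -/
def swapXY : ℝ × ℝ ≃ₜ ℝ × ℝ := Homeomorph.prodComm ℝ ℝ

@[simp] theorem reflX_apply (p : ℝ × ℝ) : reflX p = (-p.1, p.2) := rfl

@[simp] theorem swapXY_apply (p : ℝ × ℝ) : swapXY p = (p.2, p.1) := rfl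

theorem measurePreserving_reflX : MeasurePreserving reflX :=
  (Measure.measurePreserving_neg (volume : Measure ℝ)).prod (MeasurePreserving.id volume)

theorem measurePreserving_swapXY : MeasurePreserving swapXY :=
  Measure.measurePreserving_swap

theorem mem_Sq {p : ℝ × ℝ} : p ∈ Sq ↔ (-1 ≤ p.1 ∧ p.1 ≤ 1) ∧ -1 ≤ p.2 ∧ p.2 ≤ 1 := Iff.rfl

theorem reflX_preimage_Sq : reflX ⁻¹' Sq = Sq := by
  ext p
  simp only [mem_preimage, mem_Sq, reflX_apply]
  constructor <;> rintro ⟨⟨h1, h2⟩, h3⟩ <;> exact ⟨⟨by linarith, by linarith⟩, h3⟩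

theorem swapXY_preimage_Sq : swapXY ⁻¹' Sq = Sq := by
  ext p
  simp only [mem_preimage, mem_Sq, swapXY_apply]
  exact and_comm

/-- Measure preserving homeomorphisms of the plane that map the square onto itself. -/
structure IsSymm (e : ℝ × ℝ ≃ₜ ℝ × ℝ) : Prop where
  mp : MeasurePreserving e
  sq : e ⁻¹' Sq = Sq

theorem IsSymm.trans {e e' : ℝ × ℝ ≃ₜ ℝ × ℝ} (h : IsSymm e) (h' : IsSymm e') :
    IsSymm (e.trans e') where
  mp := h'.mp.comp h.mp
  sq := by change e ⁻¹' (e' ⁻¹' Sq) = Sq; rw [h'.sq, h.sq]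

theorem isSymm_reflX : IsSymm reflX := ⟨measurePreserving_reflX, reflX_preimage_Sq⟩

theorem isSymm_swapXY : IsSymm swapXY := ⟨measurePreserving_swapXY, swapXY_preimage_Sq⟩

theorem profile_I2 {f : ℝ × ℝ → ℝ} (hf : IsNiceDensity f) :
    Profile fun t => I2 f (arctan t) :=
  profile_of_symmetry hf reflX isSymm_reflX.mp isSymm_reflX.sq fun θ => by
    ext p; simp [R1, R2]; grind

theorem profile_I5 {f : ℝ × ℝ → ℝ} (hf : IsNiceDensity f) :
    Profile fun t => I5 f (arctan t) :=
  profile_of_symmetry hf swapXY isSymm_swapXY.mp isSymm_swapXY.sq fun θ => by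
    ext p; simp [R1, R5]

theorem profile_I6 {f : ℝ × ℝ → ℝ} (hf : IsNiceDensity f) :
    Profile fun t => I6 f (arctan t) :=
  have h := isSymm_swapXY.trans isSymm_reflX
  profile_of_symmetry hf _ h.mp h.sq fun θ => by
    ext p; simp [R1, R6]

theorem profile_I8 {f : ℝ × ℝ → ℝ} (hf : IsNiceDensity f) :
    Profile fun t => I8 f (arctan t) :=
  have h := isSymm_reflX.trans isSymm_swapXY
  profile_of_symmetry hf _ h.mp h.sq fun θ => by
    ext p; simp [R1, R8]; grind

theorem profile_I7 {f : ℝ × ℝ → ℝ} (hf : IsNiceDensity f) :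
    Profile fun t => I7 f (arctan t) :=
  have h := (isSymm_reflX.trans isSymm_swapXY).trans isSymm_reflX
  profile_of_symmetry hf _ h.mp h.sq fun θ => by
    ext p; simp [R1, R7]; grind

theorem profile_I4 {f : ℝ × ℝ → ℝ} (hf : IsNiceDensity f) :
    Profile fun t => I4 f (arctan t) :=
  have h := (isSymm_swapXY.trans isSymm_reflX).trans isSymm_swapXY
  profile_of_symmetry hf _ h.mp h.sq fun θ => by
    ext p; simp [R1, R4]

theorem profile_I3 {f : ℝ × ℝ → ℝ} (hf : IsNiceDensity f) :
    Profile fun t => I3 f (arctan t) :=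
  have h := ((isSymm_swapXY.trans isSymm_reflX).trans isSymm_swapXY).trans isSymm_reflX
  profile_of_symmetry hf _ h.mp h.sq fun θ => by
    ext p; simp [R1, R3]; grind

theorem Q1p_pos {f : ℝ × ℝ → ℝ} (hf : IsNiceDensity f) : 0 < Q1p f :=
  hf.setIntegral_pos (isOpen_Ioo.prod isOpen_Ioo : IsOpen (Ioo (0 : ℝ) 1 ×ˢ Ioo (0 : ℝ) 1))
    ⟨(1 / 2, 1 / 2), by norm_num⟩
    (fun p ⟨h, h'⟩ => ⟨⟨⟨by linarith [h.1], h.2.le⟩, ⟨by linarith [h'.1], h'.2.le⟩⟩, h.1⟩)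
    (fun p ⟨h, h'⟩ => ⟨⟨by linarith [h.1], h.2.le⟩, ⟨by linarith [h'.1], h'.2.le⟩⟩)

theorem Q2p_pos {f : ℝ × ℝ → ℝ} (hf : IsNiceDensity f) : 0 < Q2p f :=
  hf.setIntegral_pos (isOpen_Ioo.prod isOpen_Ioo : IsOpen (Ioo (0 : ℝ) 1 ×ˢ Ioo (0 : ℝ) 1))
    ⟨(1 / 2, 1 / 2), by norm_num⟩
    (fun p ⟨h, h'⟩ => ⟨⟨⟨by linarith [h.1], h.2.le⟩, ⟨by linarith [h'.1], h'.2.le⟩⟩, h'.1⟩)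
    (fun p ⟨h, h'⟩ => ⟨⟨by linarith [h.1], h.2.le⟩, ⟨by linarith [h'.1], h'.2.le⟩⟩)

theorem Q1m_pos {f : ℝ × ℝ → ℝ} (hf : IsNiceDensity f) : 0 < Q1m f :=
  hf.setIntegral_pos (isOpen_Ioo.prod isOpen_Ioo : IsOpen (Ioo (-1 : ℝ) 0 ×ˢ Ioo (-1 : ℝ) 0))
    ⟨(-1 / 2, -1 / 2), by norm_num⟩
    (fun p ⟨h, h'⟩ => ⟨⟨⟨h.1.le, by linarith [h.2]⟩, ⟨h'.1.le, by linarith [h'.2]⟩⟩, h.2⟩)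
    (fun p ⟨h, h'⟩ => ⟨⟨h.1.le, by linarith [h.2]⟩, ⟨h'.1.le, by linarith [h'.2]⟩⟩)

theorem Q2m_pos {f : ℝ × ℝ → ℝ} (hf : IsNiceDensity f) : 0 < Q2m f :=
  hf.setIntegral_pos (isOpen_Ioo.prod isOpen_Ioo : IsOpen (Ioo (-1 : ℝ) 0 ×ˢ Ioo (-1 : ℝ) 0))
    ⟨(-1 / 2, -1 / 2), by norm_num⟩
    (fun p ⟨h, h'⟩ => ⟨⟨⟨h.1.le, by linarith [h.2]⟩, ⟨h'.1.le, by linarith [h'.2]⟩⟩, h'.2⟩)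
    (fun p ⟨h, h'⟩ => ⟨⟨h.1.le, by linarith [h.2]⟩, ⟨h'.1.le, by linarith [h'.2]⟩⟩)

/-! ### Solving the system -/

theorem eqnHolds_arctan {t num den : ℝ} (hden : 0 < den) (h : t = num / den) :
    EqnHolds (arctan t) num den := by
  rw [EqnHolds, if_neg hden.ne', h]

/-- For every odd `n ≥ 3` and every nice probability density `f` on
`[-1,1]²`, the equilibrium system admits a non-trivial solution in `[0,π/2]⁸`, and
this solution has all `θᵢ > 0`. -/
theorem exists_nontrivial_equilibrium (n : ℕ) (hodd : Odd n) (hn : 3 ≤ n)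
    (f : ℝ × ℝ → ℝ) (hf : IsNiceDensity f) :
    ∃ θ1 θ2 θ3 θ4 θ5 θ6 θ7 θ8 : ℝ,
      θ1 ∈ Set.Icc (0 : ℝ) (π / 2) ∧ θ2 ∈ Set.Icc (0 : ℝ) (π / 2) ∧
      θ3 ∈ Set.Icc (0 : ℝ) (π / 2) ∧ θ4 ∈ Set.Icc (0 : ℝ) (π / 2) ∧
      θ5 ∈ Set.Icc (0 : ℝ) (π / 2) ∧ θ6 ∈ Set.Icc (0 : ℝ) (π / 2) ∧
      θ7 ∈ Set.Icc (0 : ℝ) (π / 2) ∧ θ8 ∈ Set.Icc (0 : ℝ) (π / 2) ∧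
      EqSys f n θ1 θ2 θ3 θ4 θ5 θ6 θ7 θ8 ∧
      0 < θ1 ∧ 0 < θ2 ∧ 0 < θ3 ∧ 0 < θ4 ∧ 0 < θ5 ∧ 0 < θ6 ∧ 0 < θ7 ∧ 0 < θ8 := by
  have hK1 : 0 < K1 f n := mul_pos (pow_pos (Q1m_pos hf) _) (pow_pos (Q1p_pos hf) _)
  have hK2 : 0 < K2 f n := mul_pos (pow_pos (Q1m_pos hf) _) (pow_pos (Q1p_pos hf) _)
  have hL1 : 0 < L1 f n := mul_pos (pow_pos (Q2m_pos hf) _) (pow_pos (Q2p_pos hf) _)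
  have hL2 : 0 < L2 f n := mul_pos (pow_pos (Q2m_pos hf) _) (pow_pos (Q2p_pos hf) _)
  set j : Fin 4 → ℝ → ℝ := ![fun t => I1 f (arctan t), fun t => I2 f (arctan t),
    fun t => I3 f (arctan t), fun t => I4 f (arctan t)] with hjdef
  -- The order 5, 8, 7, 6 makes the second half of the system formally identical to the first.
  set m : Fin 4 → ℝ → ℝ := ![fun t => I5 f (arctan t), fun t => I8 f (arctan t),
    fun t => I7 f (arctan t), fun t => I6 f (arctan t)] with hmdef
  set k : Fin 4 → ℝ := ![K1 f n / L1 f n, K2 f n / L1 f n, K2 f n / L2 f n, K1 f n / L2 f n]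
    with hkdef
  set l : Fin 4 → ℝ := ![L2 f n / K2 f n, L1 f n / K2 f n, L1 f n / K1 f n, L2 f n / K1 f n]
    with hldef
  have hj : ∀ i, Profile (j i) := by
    intro i
    fin_cases i
    exacts [profile_I1 hf, profile_I2 hf, profile_I3 hf, profile_I4 hf]
  have hm : ∀ i, Profile (m i) := by
    intro i
    fin_cases i
    exacts [profile_I5 hf, profile_I8 hf, profile_I7 hf, profile_I6 hf]
  have hk : ∀ i, 0 < k i := by
    intro i
    fin_cases i
    exacts [div_pos hK1 hL1, div_pos hK2 hL1, div_pos hK2 hL2, div_pos hK1 hL2]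
  have hl : ∀ i, 0 < l i := by
    intro i
    fin_cases i
    exacts [div_pos hL2 hK2, div_pos hL1 hK2, div_pos hL1 hK1, div_pos hL2 hK1]
  obtain ⟨a, b, ha, hb, hX, hY⟩ := exists_fixedPoint_odds hj hk hm hl
  set s := halfSlope k a b with hs
  set t := halfSlope l (oddsX j k a b) (oddsY j k a b) with ht
  have hs0 : ∀ i, 0 < s i := slope_pos hk ha hb
  have ht0 : ∀ i, 0 < t i := slope_pos hl (oddsX_pos hj hk ha hb) (oddsY_pos hj hk ha hb)
  have hjp : ∀ i, 0 < j i (s i) := fun i => (hj i).pos _ (hs0 i)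
  have hmp : ∀ i, 0 < m i (t i) := fun i => (hm i).pos _ (ht0 i)
  have ht' := slope_of_masses (k := l) hjp
  have hs' := slope_of_masses (k := k) hmp
  replace ht' : t = _ := ht'
  have hX' : (m 2 (t 2) + m 3 (t 3)) / (m 0 (t 0) + m 1 (t 1)) = a := hX
  have hY' : (m 1 (t 1) + m 2 (t 2)) / (m 0 (t 0) + m 3 (t 3)) = b := hY
  rw [hX', hY', ← hs] at hs'
  have e : ∀ θ, 0 < θ → arctan θ ∈ Icc (0 : ℝ) (π / 2) ∧ 0 < arctan θ := fun θ h =>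
    ⟨⟨(arctan_pos.2 h).le, (arctan_lt_pi_div_two θ).le⟩, arctan_pos.2 h⟩
  have j0 : 0 < I1 f (arctan (s 0)) := hjp 0
  have j1 : 0 < I2 f (arctan (s 1)) := hjp 1
  have j2 : 0 < I3 f (arctan (s 2)) := hjp 2
  have j3 : 0 < I4 f (arctan (s 3)) := hjp 3
  have m0 : 0 < I5 f (arctan (t 0)) := hmp 0
  have m1 : 0 < I8 f (arctan (t 1)) := hmp 1
  have m2 : 0 < I7 f (arctan (t 2)) := hmp 2
  have m3 : 0 < I6 f (arctan (t 3)) := hmp 3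
  have q0 := congrFun hs' 0
  have q1 := congrFun hs' 1
  have q2 := congrFun hs' 2
  have q3 := congrFun hs' 3
  have r0 := congrFun ht' 0
  have r1 := congrFun ht' 1
  have r2 := congrFun ht' 2
  have r3 := congrFun ht' 3
  simp only [hjdef, hmdef, hkdef, hldef, Matrix.cons_val] at q0 q1 q2 q3 r0 r1 r2 r3
  refine ⟨arctan (s 0), arctan (s 1), arctan (s 2), arctan (s 3), arctan (t 0), arctan (t 3),
    arctan (t 2), arctan (t 1), (e _ (hs0 _)).1, (e _ (hs0 _)).1, (e _ (hs0 _)).1,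
    (e _ (hs0 _)).1, (e _ (ht0 _)).1, (e _ (ht0 _)).1, (e _ (ht0 _)).1, (e _ (ht0 _)).1,
    ⟨eqnHolds_arctan (by positivity) (q0.trans ?_), eqnHolds_arctan (by positivity) (q1.trans ?_),
      eqnHolds_arctan (by positivity) (q2.trans ?_), eqnHolds_arctan (by positivity) (q3.trans ?_),
      eqnHolds_arctan (by positivity) (r0.trans ?_), eqnHolds_arctan (by positivity) (r3.trans ?_),
      eqnHolds_arctan (by positivity) (r2.trans ?_),
      eqnHolds_arctan (by positivity) (r1.trans ?_)⟩,
    (e _ (hs0 _)).2, (e _ (hs0 _)).2, (e _ (hs0 _)).2, (e _ (hs0 _)).2,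
    (e _ (ht0 _)).2, (e _ (ht0 _)).2, (e _ (ht0 _)).2, (e _ (ht0 _)).2⟩
  all_goals
    rw [div_mul_div_comm]
    congr 1 <;> ring
end
end

section
/- If the density f is point symmetric around the origin, i.e. f(x,y) = f(-x,-y) for all (x,y) ∈ [-1,1]², then the naive state θ1 = θ2 = ⋯ = θ8 = π/4 is a solution of the equilibrium system. -/
/-!
The naive state solves every equation of the system because, at `θ = π/4` and for a point
symmetric density, each equation has *equal* numerator and denominator. Indeed the central
symmetry `p ↦ -p` preserves Lebesgue measure and swaps `R1 ↔ R3`, `R2 ↔ R4`, `R5 ↔ R7`,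
`R6 ↔ R8`, so the integrals agree in these pairs; it also swaps the open half squares, so
`Q1p = Q1m` and `Q2p = Q2m`. As the coordinate axes are null sets, all four of these masses
equal `1/2`, whence `K1 = K2 = L1 = L2`. An equation with equal sides either reads
`π/4 = arctan 1` or imposes no constraint.
-/

open MeasureTheory Real Set

noncomputable section

lemma eqnHolds_pi_div_four {a b : ℝ} (h : a = b) : EqnHolds (π / 4) a b := by
  subst h
  unfold EqnHolds
  split_ifs with h0
  · exact Or.inl h0
  · rw [div_self h0, arctan_one]

/-- The integral of an even function is the same over a set and over its reflection. -/
lemma setIntegral_eq_of_neg {f : ℝ × ℝ → ℝ} (hsym : ∀ p, f (-p) = f p) {s t : Set (ℝ × ℝ)}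
    (hst : ∀ p, -p ∈ t ↔ p ∈ s) : ∫ p in s, f p = ∫ p in t, f p := by
  have h := (Measure.measurePreserving_neg (volume : Measure (ℝ × ℝ))).setIntegral_preimage_emb
    (MeasurableEquiv.neg (ℝ × ℝ)).measurableEmbedding f t
  rw [← h, show Neg.neg ⁻¹' t = s from Set.ext hst]
  simp only [hsym]

/-- Point symmetry on the square extends to the plane, as `f` vanishes outside the square. -/
lemma IsNiceDensity.even {f : ℝ × ℝ → ℝ} (hf : IsNiceDensity f)
    (hsym : ∀ p ∈ Sq, f p = f (-p.1, -p.2)) (p : ℝ × ℝ) : f (-p) = f p := by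
  by_cases hp : p ∈ Sq
  · exact (hsym p hp).symm
  · have hp' : -p ∉ Sq := fun h => hp <| by
      simp only [Sq, Set.mem_prod, Set.mem_Icc, Prod.fst_neg, Prod.snd_neg] at h ⊢
      exact ⟨⟨by linarith, by linarith⟩, by linarith, by linarith⟩
    rw [hf.vanish p hp, hf.vanish _ hp']

lemma neg_mem_Sq (p : ℝ × ℝ) : -p ∈ Sq ↔ p ∈ Sq := by
  simp only [Sq, Set.mem_prod, Set.mem_Icc, Prod.fst_neg, Prod.snd_neg]
  constructor <;> rintro ⟨⟨_, _⟩, _, _⟩ <;>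
    exact ⟨⟨by linarith, by linarith⟩, by linarith, by linarith⟩

/-- The two open half squares cut out by a coordinate `g` whose zero set is null carry
the whole mass. -/
lemma IsNiceDensity.halves_add {f : ℝ × ℝ → ℝ} (hf : IsNiceDensity f) {g : ℝ × ℝ → ℝ}
    (hg : Measurable g) (h0 : volume {p | g p = 0} = 0) :
    (∫ p in {p ∈ Sq | 0 < g p}, f p) + (∫ p in {p ∈ Sq | g p < 0}, f p) = 1 := by
  have hSq : MeasurableSet Sq := measurableSet_Icc.prod measurableSet_Icc
  have hint : IntegrableOn f Sq := hf.cont.integrableOn_compact (isCompact_Icc.prod isCompact_Icc)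
  have hm : MeasurableSet {p ∈ Sq | g p < 0} := hSq.inter (measurableSet_lt hg measurable_const)
  rw [← setIntegral_union _ hm (hint.mono_set fun _ h => h.1) (hint.mono_set fun _ h => h.1),
    ← hf.total]
  · refine setIntegral_congr_set ?_
    have hne : ∀ᵐ p : ℝ × ℝ, g p ≠ 0 := by simpa [ae_iff] using h0
    filter_upwards [hne] with p hp
    refine propext ⟨?_, fun h => ?_⟩
    · rintro (h | h) <;> exact h.1
    · rcases lt_or_gt_of_ne hp with h' | h'
      · exact Or.inr ⟨h, h'⟩
      · exact Or.inl ⟨h, h'⟩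
  · exact Set.disjoint_left.2 fun p h h' => lt_asymm h.2 h'.2

lemma volume_fst_eq_zero : volume {p : ℝ × ℝ | p.1 = 0} = 0 := by
  have h : {p : ℝ × ℝ | p.1 = 0} = {0} ×ˢ Set.univ := by ext; simp
  rw [h, Measure.volume_eq_prod, Measure.prod_prod]
  simp

lemma volume_snd_eq_zero : volume {p : ℝ × ℝ | p.2 = 0} = 0 := by
  have h : {p : ℝ × ℝ | p.2 = 0} = Set.univ ×ˢ {0} := by ext; simp
  rw [h, Measure.volume_eq_prod, Measure.prod_prod]
  simp

/-- If `f` is point symmetric around the origin then the naive state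
`θ₁ = ⋯ = θ₈ = π/4` solves the equilibrium system. -/
theorem naive_is_equilibrium_of_symmetric (n : ℕ) (hodd : Odd n) (hn : 3 ≤ n)
    (f : ℝ × ℝ → ℝ) (hf : IsNiceDensity f)
    (hsym : ∀ p ∈ Sq, f p = f (-p.1, -p.2)) :
    EqSys f n (π / 4) (π / 4) (π / 4) (π / 4) (π / 4) (π / 4) (π / 4) (π / 4) := by
  have hev := hf.even hsym
  have h13 : I1 f (π / 4) = I3 f (π / 4) := setIntegral_eq_of_neg hev fun p => by
    simp [R1, R3, and_left_comm]
  have h24 : I2 f (π / 4) = I4 f (π / 4) := setIntegral_eq_of_neg hev fun p => by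
    simp [R2, R4, neg_le (b := p.1), and_left_comm]
  have h57 : I5 f (π / 4) = I7 f (π / 4) := setIntegral_eq_of_neg hev fun p => by
    simp [R5, R7, and_left_comm]
  have h68 : I6 f (π / 4) = I8 f (π / 4) := setIntegral_eq_of_neg hev fun p => by
    simp [R6, R8, and_left_comm]
  have hQ1 : Q1p f = Q1m f := setIntegral_eq_of_neg hev fun p => by
    simp [neg_mem_Sq]
  have hQ2 : Q2p f = Q2m f := setIntegral_eq_of_neg hev fun p => by
    simp [neg_mem_Sq]
  have hS1 : Q1p f + Q1m f = 1 := hf.halves_add measurable_fst volume_fst_eq_zero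
  have hS2 : Q2p f + Q2m f = 1 := hf.halves_add measurable_snd volume_snd_eq_zero
  have e1 : Q1p f = 1 / 2 := by linarith
  have e2 : Q1m f = 1 / 2 := by linarith
  have e3 : Q2p f = 1 / 2 := by linarith
  have e4 : Q2m f = 1 / 2 := by linarith
  refine ⟨?_, ?_, ?_, ?_, ?_, ?_, ?_, ?_⟩ <;> apply eqnHolds_pi_div_four <;>
    simp only [K1, K2, L1, L2, e1, e2, e3, e4, h13, h24, h57, h68] <;> ring
end
end
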